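/- arXiv:1903.12154 — 2 statements merged into one kernel-verified Lean document; each statement's English description precedes it below -/
import Mathlib

section
/- Monotonicity under GMDLOPC operations: for every bipartite non-signaling device P over finite sets A, B, X, Y and every GMDLOPC operation Omega (specified by a local dice and a local post-processing as in the context), the output Omega(P) is again a bipartite non-signaling device (over A', B', X', Y'), and N_sq(Omega(P)) <= N_sq(P). -/
/-- Shannon entropy (base-2) of a finitely supported real-valued distribution. -/
noncomputable def shannonEnt {α : Type} [Fintype α] (p : α → ℝ) : ℝ :=
  -∑ a, p a * Real.logb 2 (p a)

/-- Shannon mutual information (base-2) of a joint distribution on `α × β`. -/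
noncomputable def mutInfo {α β : Type} [Fintype α] [Fintype β] (R : α → β → ℝ) : ℝ :=
  shannonEnt (fun a => ∑ b, R a b) + shannonEnt (fun b => ∑ a, R a b) -
    shannonEnt (fun p : α × β => R p.1 p.2)

/-- A bipartite non-signaling device over finite output sets `A`, `B` and input
sets `X`, `Y`. -/
def IsDevice {A B X Y : Type} [Fintype A] [Fintype B] (P : A → B → X → Y → ℝ) : Prop :=
  (∀ a b x y, 0 ≤ P a b x y) ∧
  (∀ x y, ∑ a, ∑ b, P a b x y = 1) ∧
  (∀ a x y y', ∑ b, P a b x y = ∑ b, P a b x y') ∧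
  (∀ b y x x', ∑ a, P a b x y = ∑ a, P a b x' y)

/-- The set of values `∑_e p_e · I(A:B)_{P_e(·,·|x,y)}` over all (finite) ensembles
`{(p_e, P_e)}` of the device `P` into non-signaling devices. -/
def NsqSet {A B X Y : Type} [Fintype A] [Fintype B]
    (P : A → B → X → Y → ℝ) (x : X) (y : Y) : Set ℝ :=
  { r | ∃ (n : ℕ) (p : Fin n → ℝ) (Pe : Fin n → A → B → X → Y → ℝ),
      (∀ i, 0 ≤ p i) ∧ (∑ i, p i = 1) ∧ (∀ i, IsDevice (Pe i)) ∧
      (∀ a b x' y', ∑ i, p i * Pe i a b x' y' = P a b x' y') ∧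
      r = ∑ i, p i * mutInfo (fun a b => Pe i a b x y) }

/-- The squashed non-locality of a bipartite device: the maximum over inputs `(x,y)` of
the infimum over ensembles of the averaged mutual information at fixed inputs. -/
noncomputable def Nsq {A B X Y : Type} [Fintype A] [Fintype B] [Fintype X] [Fintype Y]
    [Nonempty X] [Nonempty Y] (P : A → B → X → Y → ℝ) : ℝ :=
  Finset.univ.sup' Finset.univ_nonempty (fun xy : X × Y => sInf (NsqSet P xy.1 xy.2))

/-- A local device, i.e. one admitting a local hidden variable model. -/
def IsLocalDevice {A B X Y : Type} [Fintype A] [Fintype B] (P : A → B → X → Y → ℝ) : Prop :=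
  ∃ (n : ℕ) (mu : Fin n → ℝ) (LA : A → X → Fin n → ℝ) (LB : B → Y → Fin n → ℝ),
    (∀ i, 0 ≤ mu i) ∧ (∑ i, mu i = 1) ∧
    (∀ a x i, 0 ≤ LA a x i) ∧ (∀ x i, ∑ a, LA a x i = 1) ∧
    (∀ b y i, 0 ≤ LB b y i) ∧ (∀ y i, ∑ b, LB b y i = 1) ∧
    (∀ a b x y, P a b x y = ∑ i, mu i * LA a x i * LB b y i)

/-- The output device of a GMDLOPC operation, specified by a local dice
`D(x,y|x',y') = ∑_{λ₁} μ(λ₁) D1(x|x',λ₁) D2(y|y',λ₁)` and a local post-processing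
`PC(a',b'|a,b,x,y) = ∑_{λ₂} ν(λ₂) PC1(a'|a,x,λ₂) PC2(b'|b,y,λ₂)`. -/
noncomputable def GMDLOPCout {A B X Y A' B' X' Y' : Type} [Fintype A] [Fintype B]
    [Fintype X] [Fintype Y] {n1 n2 : ℕ}
    (P : A → B → X → Y → ℝ)
    (mu : Fin n1 → ℝ) (nu : Fin n2 → ℝ)
    (D1 : X → X' → Fin n1 → ℝ) (D2 : Y → Y' → Fin n1 → ℝ)
    (PC1 : A' → A → X → Fin n2 → ℝ) (PC2 : B' → B → Y → Fin n2 → ℝ) :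
    A' → B' → X' → Y' → ℝ :=
  fun a' b' x' y' => ∑ x, ∑ y, (∑ l1, mu l1 * D1 x x' l1 * D2 y y' l1) *
    ∑ a, ∑ b, P a b x y * (∑ l2, nu l2 * PC1 a' a x l2 * PC2 b' b y l2)

open Finset in
theorem aux_logsum {ι : Type} [Fintype ι] (c u v : ι → ℝ) (hc : ∀ i, 0 ≤ c i)
    (hu : ∀ i, 0 ≤ u i) (hv : ∀ i, 0 ≤ v i) (huv : ∀ i, v i = 0 → u i = 0) :
    (∑ i, c i * u i) * (Real.log (∑ i, c i * u i) - Real.log (∑ i, c i * v i)) ≤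
      ∑ i, c i * u i * (Real.log (u i) - Real.log (v i)) := by
  set U := ∑ i, c i * u i with hU
  set V := ∑ i, c i * v i with hV
  have hcu : ∀ i, 0 ≤ c i * u i := fun i => mul_nonneg (hc i) (hu i)
  have hcv : ∀ i, 0 ≤ c i * v i := fun i => mul_nonneg (hc i) (hv i)
  have hU0 : 0 ≤ U := sum_nonneg fun i _ => hcu i
  have hV0 : 0 ≤ V := sum_nonneg fun i _ => hcv i
  have key : ∀ i, c i * u i - c i * v i * (U / V) ≤
      c i * u i * (Real.log (u i) - Real.log (v i)) -
        c i * u i * (Real.log U - Real.log V) := by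
    intro i
    rcases (hcu i).eq_or_lt with h | h
    · rw [← h]
      have : 0 ≤ c i * v i * (U / V) := mul_nonneg (hcv i) (div_nonneg hU0 hV0)
      linarith
    · have hci : 0 < c i := (hc i).lt_of_ne (by rintro h'; rw [← h'] at h; simp at h)
      have hui : 0 < u i := (hu i).lt_of_ne (by rintro h'; rw [← h'] at h; simp at h)
      have hvi : 0 < v i := (hv i).lt_of_ne (by
        rintro h'; exact hui.ne' (huv i h'.symm))
      have hUp : 0 < U := lt_of_lt_of_le h
        (single_le_sum (f := fun i => c i * u i) (fun j _ => hcu j) (mem_univ i))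
      have hVp : 0 < V := lt_of_lt_of_le (mul_pos hci hvi)
        (single_le_sum (f := fun i => c i * v i) (fun j _ => hcv j) (mem_univ i))
      have h1 := Real.log_le_sub_one_of_pos (x := (v i * U) / (u i * V)) (by positivity)
      rw [Real.log_div (by positivity) (by positivity), Real.log_mul hvi.ne' hUp.ne',
        Real.log_mul hui.ne' hVp.ne'] at h1
      have h2 := mul_le_mul_of_nonneg_left h1 (hcu i)
      have h3 : c i * u i * ((v i * U) / (u i * V) - 1) = c i * v i * (U / V) - c i * u i := by
        field_simp
      rw [h3] at h2
      linarith
  have hs := sum_le_sum fun i (_ : i ∈ univ) => key i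
  rw [sum_sub_distrib, sum_sub_distrib, ← sum_mul, ← sum_mul, ← hU, ← hV] at hs
  have : V * (U / V) = U := by
    by_cases hV' : V = 0
    · have h0 := (sum_eq_zero_iff_of_nonneg (fun i _ => hcv i)).1 hV'
      have : U = 0 := by
        refine sum_eq_zero fun i hi => ?_
        rcases mul_eq_zero.1 (h0 i hi) with h | h
        · simp [h]
        · simp [huv i h]
      simp [this]
    · field_simp
  linarith

open Finset in
theorem aux_mutInfo_eq {α β : Type} [Fintype α] [Fintype β] (R : α → β → ℝ) :
    mutInfo R = (∑ b, ∑ a, R a b * (Real.log (R a b) - Real.log (∑ b', R a b')) -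
      ∑ b, (∑ a, R a b) * Real.log (∑ a, R a b)) / Real.log 2 := by
  unfold mutInfo shannonEnt
  have h1 : ∑ a, (∑ b, R a b) * Real.logb 2 (∑ b, R a b) =
      (∑ b, ∑ a, R a b * Real.log (∑ b', R a b')) / Real.log 2 := by
    rw [sum_comm, sum_div]
    refine sum_congr rfl fun a _ => ?_
    rw [← sum_mul, Real.logb, mul_div_assoc]
  have h2 : ∑ b, (∑ a, R a b) * Real.logb 2 (∑ a, R a b) =
      (∑ b, (∑ a, R a b) * Real.log (∑ a, R a b)) / Real.log 2 := by
    rw [sum_div]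
    refine sum_congr rfl fun a _ => ?_
    rw [Real.logb, mul_div_assoc]
  have h3 : ∑ p : α × β, R p.1 p.2 * Real.logb 2 (R p.1 p.2) =
      (∑ b, ∑ a, R a b * Real.log (R a b)) / Real.log 2 := by
    rw [Fintype.sum_prod_type, sum_comm, sum_div]
    refine sum_congr rfl fun a _ => ?_
    rw [sum_div]
    refine sum_congr rfl fun a _ => ?_
    rw [Real.logb, mul_div_assoc]
  rw [h1, h2, h3]
  simp only [mul_sub, sum_sub_distrib]
  ring

open Finset in
theorem aux_dpi1 {α β α' : Type} [Fintype α] [Fintype β] [Fintype α'] (R : α → β → ℝ)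
    (hR : ∀ a b, 0 ≤ R a b) (c : α' → α → ℝ) (hc : ∀ a' a, 0 ≤ c a' a)
    (hc1 : ∀ a, ∑ a', c a' a = 1) :
    mutInfo (fun a' b => ∑ a, c a' a * R a b) ≤ mutInfo R := by
  rw [aux_mutInfo_eq, aux_mutInfo_eq]
  refine div_le_div_of_nonneg_right ?_ (Real.log_pos one_lt_two).le
  have hb : ∀ b, ∑ a', ∑ a, c a' a * R a b = ∑ a, R a b := by
    intro b
    rw [sum_comm]
    refine sum_congr rfl fun a _ => ?_
    rw [← sum_mul, hc1, one_mul]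
  simp only [hb]
  refine sub_le_sub_right (sum_le_sum fun b _ => ?_) _
  have ha : ∀ a', ∑ b', ∑ a, c a' a * R a b' = ∑ a, c a' a * ∑ b', R a b' := by
    intro a'
    rw [sum_comm]
    simp only [mul_sum]
  simp only [ha]
  calc _ ≤ ∑ a', ∑ a, c a' a * R a b * (Real.log (R a b) - Real.log (∑ b', R a b')) := by
        refine sum_le_sum fun a' _ => ?_
        refine aux_logsum (c a') (fun a => R a b) (fun a => ∑ b', R a b') (hc a')
          (fun a => hR a b) (fun a => sum_nonneg fun b' _ => hR a b') ?_
        intro a h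
        exact (sum_eq_zero_iff_of_nonneg (fun b' _ => hR a b')).1 h b (mem_univ b)
    _ = _ := by
        rw [sum_comm]
        refine sum_congr rfl fun a _ => ?_
        rw [← sum_mul, ← sum_mul, hc1, one_mul]

open Finset in
theorem aux_mutInfo_swap {α β : Type} [Fintype α] [Fintype β] (R : α → β → ℝ) :
    mutInfo (fun b a => R a b) = mutInfo R := by
  unfold mutInfo shannonEnt
  have : ∑ p : β × α, R p.2 p.1 * Real.logb 2 (R p.2 p.1) =
      ∑ p : α × β, R p.1 p.2 * Real.logb 2 (R p.1 p.2) := by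
    rw [Fintype.sum_prod_type, Fintype.sum_prod_type, sum_comm]
  rw [this]
  ring

open Finset in
theorem aux_dpi {α β α' β' : Type} [Fintype α] [Fintype β] [Fintype α'] [Fintype β']
    (R : α → β → ℝ)
    (hR : ∀ a b, 0 ≤ R a b) (c : α' → α → ℝ) (hc : ∀ a' a, 0 ≤ c a' a)
    (hc1 : ∀ a, ∑ a', c a' a = 1) (d : β' → β → ℝ) (hd : ∀ b' b, 0 ≤ d b' b)
    (hd1 : ∀ b, ∑ b', d b' b = 1) :
    mutInfo (fun a' b' => ∑ a, ∑ b, R a b * c a' a * d b' b) ≤ mutInfo R := by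
  have h1 := aux_dpi1 R hR c hc hc1
  have h2 := aux_dpi1 (fun b a' => ∑ a, c a' a * R a b)
    (fun b a' => sum_nonneg fun a _ => mul_nonneg (hc _ _) (hR _ _)) d hd hd1
  rw [aux_mutInfo_swap (fun a' b => ∑ a, c a' a * R a b)] at h2
  have h3 := aux_mutInfo_swap (fun a' b' => ∑ b, d b' b * ∑ a, c a' a * R a b)
  rw [h3] at h2
  refine le_trans (le_of_eq ?_) (h2.trans h1)
  congr 1
  funext a' b'
  rw [sum_comm]
  refine sum_congr rfl fun b _ => ?_
  rw [mul_sum]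
  refine sum_congr rfl fun a _ => ?_
  ring

open Finset in
theorem aux_mutInfo_nonneg {α β : Type} [Fintype α] [Fintype β] (R : α → β → ℝ)
    (hR : ∀ a b, 0 ≤ R a b) (h1 : ∑ a, ∑ b, R a b = 1) : 0 ≤ mutInfo R := by
  have := aux_dpi R hR (fun (_ : Unit) _ => 1) (by simp) (by simp)
    (fun (_ : Unit) _ => 1) (by simp) (by simp)
  refine le_trans (le_of_eq ?_) this
  simp [mutInfo, shannonEnt, h1]

/-- Deterministic-in-hidden-variable local processing of a device. -/
noncomputable def auxOut {A B X Y A' B' X' Y' : Type} [Fintype A] [Fintype B]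
    [Fintype X] [Fintype Y] (P : A → B → X → Y → ℝ)
    (d1 : X → X' → ℝ) (d2 : Y → Y' → ℝ) (c1 : A' → A → X → ℝ) (c2 : B' → B → Y → ℝ) :
    A' → B' → X' → Y' → ℝ :=
  fun a' b' x' y' => ∑ x, ∑ y, d1 x x' * d2 y y' *
    ∑ a, ∑ b, P a b x y * c1 a' a x * c2 b' b y

open Finset in
theorem auxOut_swap {A B X Y A' B' X' Y' : Type} [Fintype A] [Fintype B]
    [Fintype X] [Fintype Y] (P : A → B → X → Y → ℝ)
    (d1 : X → X' → ℝ) (d2 : Y → Y' → ℝ) (c1 : A' → A → X → ℝ) (c2 : B' → B → Y → ℝ)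
    (a' : A') (b' : B') (x' : X') (y' : Y') :
    auxOut P d1 d2 c1 c2 a' b' x' y' =
      auxOut (fun b a y x => P a b x y) d2 d1 c2 c1 b' a' y' x' := by
  unfold auxOut
  rw [sum_comm]
  refine sum_congr rfl fun y _ => sum_congr rfl fun x _ => ?_
  rw [sum_comm, mul_comm (d1 x x')]
  congr 1
  refine sum_congr rfl fun b _ => sum_congr rfl fun a _ => ?_
  ring

open Finset in
theorem auxOut_marg {A B X Y A' B' X' Y' : Type} [Fintype A] [Fintype B]
    [Fintype X] [Fintype Y] [Fintype B'] (P : A → B → X → Y → ℝ)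
    (hP : ∀ a x y y', ∑ b, P a b x y = ∑ b, P a b x y')
    (d1 : X → X' → ℝ) (d2 : Y → Y' → ℝ) (hd2 : ∀ y', ∑ y, d2 y y' = 1)
    (c1 : A' → A → X → ℝ) (c2 : B' → B → Y → ℝ) (hc2 : ∀ b y, ∑ b', c2 b' b y = 1)
    (y0 : Y) (a' : A') (x' : X') (y' : Y') :
    ∑ b', auxOut P d1 d2 c1 c2 a' b' x' y' =
      ∑ x, d1 x x' * ∑ a, c1 a' a x * ∑ b, P a b x y0 := by
  unfold auxOut
  rw [sum_comm]
  refine sum_congr rfl fun x _ => ?_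
  rw [sum_comm]
  calc _ = ∑ y, d1 x x' * d2 y y' * ∑ a, c1 a' a x * ∑ b, P a b x y0 := by
        refine sum_congr rfl fun y _ => ?_
        rw [← mul_sum]
        congr 1
        rw [sum_comm]
        refine sum_congr rfl fun a _ => ?_
        rw [sum_comm, ← hP a x y y0, mul_sum]
        refine sum_congr rfl fun b _ => ?_
        rw [← mul_sum, hc2]
        ring
    _ = _ := by
        rw [← sum_mul, ← mul_sum, hd2, mul_one]

open Finset in
theorem auxOut_isDevice {A B X Y A' B' X' Y' : Type} [Fintype A] [Fintype B]
    [Fintype X] [Fintype Y] [Fintype A'] [Fintype B'] [Nonempty X] [Nonempty Y]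
    (P : A → B → X → Y → ℝ) (hP : IsDevice P)
    (d1 : X → X' → ℝ) (hd10 : ∀ x x', 0 ≤ d1 x x') (hd1 : ∀ x', ∑ x, d1 x x' = 1)
    (d2 : Y → Y' → ℝ) (hd20 : ∀ y y', 0 ≤ d2 y y') (hd2 : ∀ y', ∑ y, d2 y y' = 1)
    (c1 : A' → A → X → ℝ) (hc10 : ∀ a' a x, 0 ≤ c1 a' a x)
    (hc1 : ∀ a x, ∑ a', c1 a' a x = 1)
    (c2 : B' → B → Y → ℝ) (hc20 : ∀ b' b y, 0 ≤ c2 b' b y)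
    (hc2 : ∀ b y, ∑ b', c2 b' b y = 1) :
    IsDevice (auxOut P d1 d2 c1 c2) := by
  obtain ⟨h0, h1, hA, hB⟩ := hP
  obtain ⟨x0⟩ := ‹Nonempty X›
  obtain ⟨y0⟩ := ‹Nonempty Y›
  have mA := auxOut_marg P hA d1 d2 hd2 c1 c2 hc2 y0
  refine ⟨?_, ?_, ?_, ?_⟩
  · intro a' b' x' y'
    exact sum_nonneg fun x _ => sum_nonneg fun y _ =>
      mul_nonneg (mul_nonneg (hd10 _ _) (hd20 _ _)) (sum_nonneg fun a _ => sum_nonneg fun b _ =>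
        mul_nonneg (mul_nonneg (h0 _ _ _ _) (hc10 _ _ _)) (hc20 _ _ _))
  · intro x' y'
    simp only [mA]
    rw [sum_comm, ← hd1 x']
    refine sum_congr rfl fun x _ => ?_
    rw [← mul_sum, sum_comm]
    have : ∑ a, ∑ a', c1 a' a x * ∑ b, P a b x y0 = 1 := by
      rw [← h1 x y0]
      refine sum_congr rfl fun a _ => ?_
      rw [← sum_mul, hc1, one_mul]
    rw [this, mul_one]
  · intro a x y y'
    rw [mA, mA]
  · intro b y x x'
    simp only [auxOut_swap P]
    rw [auxOut_marg (fun b a y x => P a b x y) hB d2 d1 hd1 c2 c1 hc1 x0,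
      auxOut_marg (fun b a y x => P a b x y) hB d2 d1 hd1 c2 c1 hc1 x0]

open Finset in
theorem aux_mix_isDevice {A B X Y J : Type} [Fintype A] [Fintype B] [Fintype J]
    (q : J → ℝ) (hq0 : ∀ j, 0 ≤ q j) (hq1 : ∑ j, q j = 1)
    (Q : J → A → B → X → Y → ℝ) (hQ : ∀ j, IsDevice (Q j)) (P : A → B → X → Y → ℝ)
    (hP : ∀ a b x y, ∑ j, q j * Q j a b x y = P a b x y) : IsDevice P := by
  have eB : ∀ a x y, ∑ b, P a b x y = ∑ j, q j * ∑ b, Q j a b x y := by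
    intro a x y
    simp only [← hP, mul_sum]
    rw [sum_comm]
  have eA : ∀ b x y, ∑ a, P a b x y = ∑ j, q j * ∑ a, Q j a b x y := by
    intro a x y
    simp only [← hP, mul_sum]
    rw [sum_comm]
  refine ⟨?_, ?_, ?_, ?_⟩
  · intro a b x y
    rw [← hP]
    exact sum_nonneg fun j _ => mul_nonneg (hq0 j) ((hQ j).1 _ _ _ _)
  · intro x y
    simp only [eB]
    rw [sum_comm, ← hq1]
    refine sum_congr rfl fun j _ => ?_
    rw [← mul_sum, (hQ j).2.1, mul_one]
  · intro a x y y'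
    rw [eB, eB]
    exact sum_congr rfl fun j _ => by rw [(hQ j).2.2.1 a x y y']
  · intro b y x x'
    rw [eA, eA]
    exact sum_congr rfl fun j _ => by rw [(hQ j).2.2.2 b y x x']

open Finset in
theorem aux_mem_NsqSet {A B X Y J : Type} [Fintype A] [Fintype B] [Fintype J]
    (q : J → ℝ) (hq0 : ∀ j, 0 ≤ q j) (hq1 : ∑ j, q j = 1)
    (Q : J → A → B → X → Y → ℝ) (hQ : ∀ j, IsDevice (Q j)) (P : A → B → X → Y → ℝ)
    (hP : ∀ a b x y, ∑ j, q j * Q j a b x y = P a b x y) (x : X) (y : Y) :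
    ∑ j, q j * mutInfo (fun a b => Q j a b x y) ∈ NsqSet P x y := by
  let e := (Fintype.equivFin J).symm
  refine ⟨Fintype.card J, fun i => q (e i), fun i => Q (e i), fun i => hq0 _, ?_,
    fun i => hQ _, ?_, ?_⟩
  · rw [← hq1]; exact e.sum_comp q
  · intro a b x y
    rw [← hP]
    exact e.sum_comp (fun j => q j * Q j a b x y)
  · exact (e.sum_comp (fun j => q j * mutInfo (fun a b => Q j a b x y))).symm

open Finset in
theorem aux_convex {A B X Y J : Type} [Fintype A] [Fintype B] [Fintype J]
    (q : J → ℝ) (hq0 : ∀ j, 0 ≤ q j) (hq1 : ∑ j, q j = 1)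
    (Q : J → A → B → X → Y → ℝ) (P : A → B → X → Y → ℝ)
    (hP : ∀ a b x y, ∑ j, q j * Q j a b x y = P a b x y) (x : X) (y : Y) (t : ℝ)
    (h : ∀ j, ∃ r ∈ NsqSet (Q j) x y, r ≤ t) : ∃ r ∈ NsqSet P x y, r ≤ t := by
  choose r hr hrt using h
  choose n p Pe hp0 hp1 hPe hsum hre using hr
  have := aux_mem_NsqSet (J := (j : J) × Fin (n j)) (fun s => q s.1 * p s.1 s.2)
    (fun s => mul_nonneg (hq0 _) (hp0 _ _))
    (by
      rw [Fintype.sum_sigma, ← hq1]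
      refine sum_congr rfl fun j _ => ?_
      simp only [← mul_sum, hp1, mul_one])
    (fun s => Pe s.1 s.2) (fun s => hPe _ _) P
    (by
      intro a b x y
      rw [Fintype.sum_sigma, ← hP]
      refine sum_congr rfl fun j _ => ?_
      rw [← hsum, mul_sum]
      exact sum_congr rfl fun i _ => by ring) x y
  refine ⟨_, this, ?_⟩
  rw [Fintype.sum_sigma]
  calc _ = ∑ j, q j * r j := by
        refine sum_congr rfl fun j _ => ?_
        rw [hre, mul_sum]
        exact sum_congr rfl fun i _ => by ring
    _ ≤ ∑ j, q j * t := sum_le_sum fun j _ => mul_le_mul_of_nonneg_left (hrt j) (hq0 j)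
    _ = t := by rw [← sum_mul, hq1, one_mul]

open Finset in
theorem aux_bdd {A B X Y : Type} [Fintype A] [Fintype B]
    (P : A → B → X → Y → ℝ) (x : X) (y : Y) : BddBelow (NsqSet P x y) := by
  refine ⟨0, ?_⟩
  rintro r ⟨n, p, Pe, hp0, hp1, hPe, hsum, rfl⟩
  exact sum_nonneg fun i _ => mul_nonneg (hp0 i)
    (aux_mutInfo_nonneg _ (fun a b => (hPe i).1 a b x y) ((hPe i).2.1 x y))

open Finset in
theorem aux_local {A B X Y A' B' X' Y' : Type} [Fintype A] [Fintype B]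
    [Fintype X] [Fintype Y] [Fintype A'] [Fintype B'] [Nonempty X] [Nonempty Y]
    [DecidableEq X] [DecidableEq Y]
    (P : A → B → X → Y → ℝ)
    (d1 : X → X' → ℝ) (hd10 : ∀ x x', 0 ≤ d1 x x') (hd1 : ∀ x', ∑ x, d1 x x' = 1)
    (d2 : Y → Y' → ℝ) (hd20 : ∀ y y', 0 ≤ d2 y y') (hd2 : ∀ y', ∑ y, d2 y y' = 1)
    (c1 : A' → A → X → ℝ) (hc10 : ∀ a' a x, 0 ≤ c1 a' a x)
    (hc1 : ∀ a x, ∑ a', c1 a' a x = 1)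
    (c2 : B' → B → Y → ℝ) (hc20 : ∀ b' b y, 0 ≤ c2 b' b y)
    (hc2 : ∀ b y, ∑ b', c2 b' b y = 1) (x : X) (y : Y) (x' : X') (y' : Y')
    (hx : ∀ z, d1 z x' = if z = x then 1 else 0) (hy : ∀ z, d2 z y' = if z = y then 1 else 0)
    (t : ℝ) (h : ∃ r ∈ NsqSet P x y, r ≤ t) :
    ∃ r ∈ NsqSet (auxOut P d1 d2 c1 c2) x' y', r ≤ t := by
  obtain ⟨r, ⟨n, p, Pe, hp0, hp1, hPe, hsum, rfl⟩, hr⟩ := h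
  refine ⟨_, ⟨n, p, fun i => auxOut (Pe i) d1 d2 c1 c2, hp0, hp1, fun i =>
    auxOut_isDevice _ (hPe i) d1 hd10 hd1 d2 hd20 hd2 c1 hc10 hc1 c2 hc20 hc2, ?_, rfl⟩, ?_⟩
  · intro a b x y
    unfold auxOut
    simp only [← hsum, mul_sum, sum_mul]
    rw [sum_comm]
    refine sum_congr rfl fun _ _ => ?_
    rw [sum_comm]
    refine sum_congr rfl fun _ _ => ?_
    rw [sum_comm]
    refine sum_congr rfl fun _ _ => ?_
    rw [sum_comm]
    refine sum_congr rfl fun _ _ => sum_congr rfl fun _ _ => ?_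
    ring
  · refine le_trans (sum_le_sum fun i _ => mul_le_mul_of_nonneg_left ?_ (hp0 i)) hr
    refine le_trans (le_of_eq ?_) (aux_dpi (fun a b => Pe i a b x y)
      (fun a b => (hPe i).1 a b x y) (fun a' a => c1 a' a x) (fun _ _ => hc10 _ _ _)
      (fun _ => hc1 _ _) (fun b' b => c2 b' b y) (fun _ _ => hc20 _ _ _)
      (fun _ => hc2 _ _))
    congr 1
    funext a' b'
    simp [auxOut, hx, hy]

open Finset in
theorem aux_local' {A B X Y A' B' X' Y' : Type} [Fintype A] [Fintype B]
    [Fintype X] [Fintype Y] [Fintype A'] [Fintype B'] [Nonempty X] [Nonempty Y]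
    (P : A → B → X → Y → ℝ)
    (d1 : X → X' → ℝ) (hd10 : ∀ x x', 0 ≤ d1 x x') (hd1 : ∀ x', ∑ x, d1 x x' = 1)
    (d2 : Y → Y' → ℝ) (hd20 : ∀ y y', 0 ≤ d2 y y') (hd2 : ∀ y', ∑ y, d2 y y' = 1)
    (c1 : A' → A → X → ℝ) (hc10 : ∀ a' a x, 0 ≤ c1 a' a x)
    (hc1 : ∀ a x, ∑ a', c1 a' a x = 1)
    (c2 : B' → B → Y → ℝ) (hc20 : ∀ b' b y, 0 ≤ c2 b' b y)
    (hc2 : ∀ b y, ∑ b', c2 b' b y = 1) (x' : X') (y' : Y')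
    (t : ℝ) (h : ∀ x y, ∃ r ∈ NsqSet P x y, r ≤ t) :
    ∃ r ∈ NsqSet (auxOut P d1 d2 c1 c2) x' y', r ≤ t := by
  classical
  let e1 : X → X → X' → ℝ := fun x z u => if u = x' then (if z = x then 1 else 0) else d1 z u
  let e2 : Y → Y → Y' → ℝ := fun y z u => if u = y' then (if z = y then 1 else 0) else d2 z u
  have s1 : ∀ z u, ∑ x, d1 x x' * e1 x z u = d1 z u := by
    intro z u
    by_cases hu : u = x'
    · simp [e1, hu]
    · simp [e1, hu, ← sum_mul, hd1]
  have s2 : ∀ z u, ∑ y, d2 y y' * e2 y z u = d2 z u := by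
    intro z u
    by_cases hu : u = y'
    · simp [e2, hu]
    · simp [e2, hu, ← sum_mul, hd2]
  refine aux_convex (J := X × Y) (fun j => d1 j.1 x' * d2 j.2 y')
    (fun j => mul_nonneg (hd10 _ _) (hd20 _ _)) ?_
    (fun j => auxOut P (e1 j.1) (e2 j.2) c1 c2) _ ?_ x' y' t ?_
  · rw [Fintype.sum_prod_type]
    simp only [← mul_sum, hd2, mul_one, hd1]
  · intro a b u v
    unfold auxOut
    simp only [mul_sum (s := (univ : Finset X))]
    rw [sum_comm]
    refine sum_congr rfl fun z _ => ?_
    simp only [mul_sum (s := (univ : Finset Y))]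
    rw [sum_comm]
    refine sum_congr rfl fun w _ => ?_
    rw [← s1 z u, ← s2 w v, sum_mul_sum, Fintype.sum_prod_type, sum_mul]
    refine sum_congr rfl fun x _ => ?_
    rw [sum_mul]
    refine sum_congr rfl fun y _ => ?_
    ring
  · rintro ⟨x, y⟩
    refine aux_local P _ ?_ ?_ _ ?_ ?_ c1 hc10 hc1 c2 hc20 hc2 x y x' y' ?_ ?_ t (h x y)
    · intro z u
      by_cases hu : u = x'
      · simp only [e1, hu, if_true]; split_ifs <;> simp
      · simp only [e1, hu, if_false]; exact hd10 _ _
    · intro u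
      by_cases hu : u = x' <;> simp [e1, hu, hd1]
    · intro z u
      by_cases hu : u = y'
      · simp only [e2, hu, if_true]; split_ifs <;> simp
      · simp only [e2, hu, if_false]; exact hd20 _ _
    · intro u
      by_cases hu : u = y' <;> simp [e2, hu, hd2]
    · intro z; simp [e1]
    · intro z; simp [e2]

open Finset in
theorem aux_GMD {A B X Y A' B' X' Y' : Type} [Fintype A] [Fintype B]
    [Fintype X] [Fintype Y] {n1 n2 : ℕ}
    (P : A → B → X → Y → ℝ)
    (mu : Fin n1 → ℝ) (nu : Fin n2 → ℝ)
    (D1 : X → X' → Fin n1 → ℝ) (D2 : Y → Y' → Fin n1 → ℝ)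
    (PC1 : A' → A → X → Fin n2 → ℝ) (PC2 : B' → B → Y → Fin n2 → ℝ)
    (a' : A') (b' : B') (x' : X') (y' : Y') :
    ∑ j : Fin n1 × Fin n2, mu j.1 * nu j.2 *
      auxOut P (fun x x' => D1 x x' j.1) (fun y y' => D2 y y' j.1)
        (fun a' a x => PC1 a' a x j.2) (fun b' b y => PC2 b' b y j.2) a' b' x' y' =
    GMDLOPCout P mu nu D1 D2 PC1 PC2 a' b' x' y' := by
  unfold auxOut GMDLOPCout
  simp only [mul_sum (s := (univ : Finset X))]
  rw [sum_comm]
  refine sum_congr rfl fun x _ => ?_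
  simp only [mul_sum (s := (univ : Finset Y))]
  rw [sum_comm]
  refine sum_congr rfl fun y _ => ?_
  have : ∑ a, ∑ b, P a b x y * (∑ l2, nu l2 * PC1 a' a x l2 * PC2 b' b y l2) =
      ∑ l2, nu l2 * ∑ a, ∑ b, P a b x y * PC1 a' a x l2 * PC2 b' b y l2 := by
    simp only [mul_sum]
    symm
    rw [sum_comm]
    refine sum_congr rfl fun a _ => ?_
    rw [sum_comm]
    refine sum_congr rfl fun b _ => sum_congr rfl fun l _ => ?_
    ring
  rw [this, sum_mul_sum, Fintype.sum_prod_type]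
  refine sum_congr rfl fun l1 _ => sum_congr rfl fun l2 _ => ?_
  ring

/-- Monotonicity of the squashed non-locality under GMDLOPC operations: the output of a
GMDLOPC operation is again a bipartite non-signaling device, and its squashed
non-locality does not exceed that of the input device. -/
theorem Nsq_monotone_GMDLOPC {A B X Y A' B' X' Y' : Type}
    [Fintype A] [Fintype B] [Fintype X] [Fintype Y]
    [Fintype A'] [Fintype B'] [Fintype X'] [Fintype Y']
    [Nonempty X] [Nonempty Y] [Nonempty X'] [Nonempty Y']
    (P : A → B → X → Y → ℝ) (hP : IsDevice P)
    {n1 n2 : ℕ}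
    (mu : Fin n1 → ℝ) (hmu0 : ∀ l1, 0 ≤ mu l1) (hmu1 : ∑ l1, mu l1 = 1)
    (nu : Fin n2 → ℝ) (hnu0 : ∀ l2, 0 ≤ nu l2) (hnu1 : ∑ l2, nu l2 = 1)
    (D1 : X → X' → Fin n1 → ℝ) (hD10 : ∀ x x' l1, 0 ≤ D1 x x' l1)
    (hD11 : ∀ x' l1, ∑ x, D1 x x' l1 = 1)
    (D2 : Y → Y' → Fin n1 → ℝ) (hD20 : ∀ y y' l1, 0 ≤ D2 y y' l1)
    (hD21 : ∀ y' l1, ∑ y, D2 y y' l1 = 1)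
    (PC1 : A' → A → X → Fin n2 → ℝ) (hPC10 : ∀ a' a x l2, 0 ≤ PC1 a' a x l2)
    (hPC11 : ∀ a x l2, ∑ a', PC1 a' a x l2 = 1)
    (PC2 : B' → B → Y → Fin n2 → ℝ) (hPC20 : ∀ b' b y l2, 0 ≤ PC2 b' b y l2)
    (hPC21 : ∀ b y l2, ∑ b', PC2 b' b y l2 = 1) :
    IsDevice (GMDLOPCout P mu nu D1 D2 PC1 PC2) ∧
      Nsq (GMDLOPCout P mu nu D1 D2 PC1 PC2) ≤ Nsq P := by
  have hw0 : ∀ j : Fin n1 × Fin n2, 0 ≤ mu j.1 * nu j.2 :=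
    fun j => mul_nonneg (hmu0 _) (hnu0 _)
  have hw1 : ∑ j : Fin n1 × Fin n2, mu j.1 * nu j.2 = 1 := by
    rw [Fintype.sum_prod_type]
    simp only [← Finset.mul_sum, hnu1, mul_one, hmu1]
  refine ⟨aux_mix_isDevice _ hw0 hw1 _ (fun j => ?_) _ (aux_GMD P mu nu D1 D2 PC1 PC2), ?_⟩
  · exact auxOut_isDevice P hP _ (fun u v => hD10 u v j.1) (fun u => hD11 u j.1)
      _ (fun u v => hD20 u v j.1) (fun u => hD21 u j.1) _ (fun u v w => hPC10 u v w j.2)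
      (fun u v => hPC11 u v j.2) _ (fun u v w => hPC20 u v w j.2) (fun u v => hPC21 u v j.2)
  · refine Finset.sup'_le _ _ ?_
    rintro ⟨x', y'⟩ -
    refine le_of_forall_pos_le_add fun ε hε => ?_
    have hlt : ∀ x y, ∃ r ∈ NsqSet P x y, r ≤ Nsq P + ε := by
      intro x y
      have hne : (NsqSet P x y).Nonempty :=
        ⟨_, aux_mem_NsqSet (J := Unit) (fun _ => 1) (by simp) (by simp) (fun _ => P)
          (fun _ => hP) P (by simp) x y⟩
      have hle : sInf (NsqSet P x y) ≤ Nsq P :=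
        Finset.le_sup' (fun xy : X × Y => sInf (NsqSet P xy.1 xy.2)) (Finset.mem_univ (x, y))
      obtain ⟨r, hr, hr'⟩ := exists_lt_of_csInf_lt hne
        (lt_of_le_of_lt hle (lt_add_of_pos_right _ hε))
      exact ⟨r, hr, hr'.le⟩
    obtain ⟨r, hr, hr'⟩ := aux_convex _ hw0 hw1 _ _ (aux_GMD P mu nu D1 D2 PC1 PC2) x' y'
      (Nsq P + ε) (fun j => aux_local' P _ (fun u v => hD10 u v j.1) (fun u => hD11 u j.1)
      _ (fun u v => hD20 u v j.1) (fun u => hD21 u j.1) _ (fun u v w => hPC10 u v w j.2)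
      (fun u v => hPC11 u v j.2) _ (fun u v w => hPC20 u v w j.2) (fun u v => hPC21 u v j.2)
      x' y' _ hlt)
    exact (csInf_le (aux_bdd _ _ _) hr).trans hr'
end

section
/- Non-locality cost bound: let P be a bipartite non-signaling device over finite sets A, B, X, Y, and suppose P = alpha*Q + (1-alpha)*L pointwise, where 0 <= alpha <= 1, Q is a bipartite non-signaling device, and L is a local device, i.e. L(a,b|x,y) = sum over lambda of mu(lambda) * L_A(a|x,lambda) * L_B(b|y,lambda) for some finite set Lambda, probability distribution mu, and conditional probability distributions L_A, L_B. Then N_sq(P) <= alpha * log2(min(|A|, |B|)). -/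
theorem shannonEnt_le_card {α : Type} [Fintype α] (p : α → ℝ) (h0 : ∀ a, 0 ≤ p a)
    (h1 : ∑ a, p a = 1) : shannonEnt p ≤ Real.logb 2 (Fintype.card α : ℝ) := by
  have hne : Nonempty α := by
    by_contra h
    rw [not_nonempty_iff] at h
    simp at h1
  have hn : (0 : ℝ) < Fintype.card α := by exact_mod_cast Fintype.card_pos
  have hl : 0 < Real.log 2 := Real.log_pos (by norm_num)
  have key : ∀ a, -(p a * Real.log (p a)) - p a * Real.log (Fintype.card α : ℝ)
      ≤ 1 / (Fintype.card α : ℝ) - p a := by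
    intro a
    rcases (h0 a).eq_or_lt with h | h
    · rw [← h]; simp
    · have h2 := Real.log_le_sub_one_of_pos (x := 1 / (p a * (Fintype.card α : ℝ)))
        (by positivity)
      rw [one_div, Real.log_inv, Real.log_mul h.ne' hn.ne'] at h2
      have h3 := mul_le_mul_of_nonneg_left h2 h.le
      have h4 : p a * ((p a * (Fintype.card α : ℝ))⁻¹ - 1) = 1 / (Fintype.card α : ℝ) - p a := by
        field_simp
      linarith
  have hs := Finset.sum_le_sum (fun a (_ : a ∈ Finset.univ) => key a)
  rw [Finset.sum_sub_distrib, Finset.sum_sub_distrib, ← Finset.sum_mul, h1,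
    Finset.sum_neg_distrib] at hs
  have hc : ∑ a : α, 1 / (Fintype.card α : ℝ) = 1 := by
    simp [hn.ne']
  rw [hc] at hs
  have he : shannonEnt p = (-∑ a, p a * Real.log (p a)) / Real.log 2 := by
    simp only [shannonEnt, Real.logb, neg_div, Finset.sum_div, mul_div_assoc]
  rw [he, Real.logb]
  exact div_le_div_of_nonneg_right (by linarith) hl.le

theorem mul_logb_mono {r s : ℝ} (h0 : 0 ≤ r) (h : r ≤ s) :
    r * Real.logb 2 r ≤ r * Real.logb 2 s := by
  rcases h0.eq_or_lt with h1 | h1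
  · rw [← h1]; simp
  · exact mul_le_mul_of_nonneg_left
      (Real.logb_le_logb_of_le (by norm_num) h1 h) h0

theorem shannonEnt_fst_le {α β : Type} [Fintype α] [Fintype β] (R : α → β → ℝ)
    (h0 : ∀ a b, 0 ≤ R a b) :
    shannonEnt (fun a => ∑ b, R a b) ≤ shannonEnt (fun p : α × β => R p.1 p.2) := by
  unfold shannonEnt
  rw [Fintype.sum_prod_type]
  apply neg_le_neg
  apply Finset.sum_le_sum
  intro a _
  rw [Finset.sum_mul]
  apply Finset.sum_le_sum
  intro b _
  exact mul_logb_mono (h0 a b)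
    (Finset.single_le_sum (f := fun b => R a b) (fun b _ => h0 a b) (Finset.mem_univ b))

theorem shannonEnt_snd_le {α β : Type} [Fintype α] [Fintype β] (R : α → β → ℝ)
    (h0 : ∀ a b, 0 ≤ R a b) :
    shannonEnt (fun b => ∑ a, R a b) ≤ shannonEnt (fun p : α × β => R p.1 p.2) := by
  unfold shannonEnt
  rw [Fintype.sum_prod_type, Finset.sum_comm]
  apply neg_le_neg
  apply Finset.sum_le_sum
  intro b _
  rw [Finset.sum_mul]
  apply Finset.sum_le_sum
  intro a _
  exact mul_logb_mono (h0 a b)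
    (Finset.single_le_sum (f := fun a => R a b) (fun a _ => h0 a b) (Finset.mem_univ a))

theorem mutInfo_le {α β : Type} [Fintype α] [Fintype β] (R : α → β → ℝ)
    (h0 : ∀ a b, 0 ≤ R a b) (h1 : ∑ a, ∑ b, R a b = 1) :
    mutInfo R ≤ Real.logb 2 ((min (Fintype.card α) (Fintype.card β) : ℕ) : ℝ) := by
  have hA := shannonEnt_le_card (fun a => ∑ b, R a b)
    (fun a => Finset.sum_nonneg fun b _ => h0 a b) h1
  have hB := shannonEnt_le_card (fun b => ∑ a, R a b)
    (fun b => Finset.sum_nonneg fun a _ => h0 a b) (by rw [Finset.sum_comm]; exact h1)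
  have h2 := shannonEnt_fst_le R h0
  have h3 := shannonEnt_snd_le R h0
  unfold mutInfo
  rcases min_choice (Fintype.card α) (Fintype.card β) with h | h <;> rw [h] <;> linarith

theorem mutInfo_prod {α β : Type} [Fintype α] [Fintype β] (f : α → ℝ) (g : β → ℝ)
    (hf : ∑ a, f a = 1) (hg : ∑ b, g b = 1) :
    mutInfo (fun a b => f a * g b) = 0 := by
  have key : ∀ a b, f a * g b * Real.logb 2 (f a * g b)
      = (f a * Real.logb 2 (f a)) * g b + f a * (g b * Real.logb 2 (g b)) := by
    intro a b
    by_cases ha : f a = 0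
    · simp [ha]
    by_cases hb : g b = 0
    · simp [hb]
    rw [Real.logb_mul ha hb]; ring
  simp only [mutInfo, shannonEnt, Fintype.sum_prod_type, key, Finset.sum_add_distrib,
    ← Finset.mul_sum, ← Finset.sum_mul, hf, hg, mul_one, one_mul]
  ring

theorem prod_isDevice {A B X Y : Type} [Fintype A] [Fintype B] (f : A → X → ℝ) (g : B → Y → ℝ)
    (hf0 : ∀ a x, 0 ≤ f a x) (hg0 : ∀ b y, 0 ≤ g b y)
    (hf : ∀ x, ∑ a, f a x = 1) (hg : ∀ y, ∑ b, g b y = 1) :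
    IsDevice (fun a b x y => f a x * g b y) := by
  refine ⟨fun a b x y => mul_nonneg (hf0 a x) (hg0 b y), ?_, ?_, ?_⟩
  · intro x y
    simp only [← Finset.mul_sum, hg, mul_one, hf]
  · intro a x y y'
    simp only [← Finset.mul_sum, hg]
  · intro b y x x'
    simp only [← Finset.sum_mul, hf]

theorem Nsq_le_nonlocality_cost {A B X Y : Type} [Fintype A] [Fintype B]
    [Fintype X] [Fintype Y] [Nonempty X] [Nonempty Y]
    (P Q L : A → B → X → Y → ℝ) (hP : IsDevice P) (hQ : IsDevice Q)
    (hL : IsLocalDevice L)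
    (α : ℝ) (hα0 : 0 ≤ α) (hα1 : α ≤ 1)
    (hdecomp : ∀ a b x y, P a b x y = α * Q a b x y + (1 - α) * L a b x y) :
    Nsq P ≤ α * Real.logb 2 ((min (Fintype.card A) (Fintype.card B) : ℕ) : ℝ) := by
  obtain ⟨n, mu, LA, LB, hmu0, hmu1, hA0, hA1, hB0, hB1, hLeq⟩ := hL
  unfold Nsq
  apply Finset.sup'_le
  rintro ⟨x, y⟩ -
  have hlog : 0 ≤ Real.logb 2 ((min (Fintype.card A) (Fintype.card B) : ℕ) : ℝ) :=
    div_nonneg (Real.log_natCast_nonneg _) (Real.log_nonneg (by norm_num))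
  by_cases hb : BddBelow (NsqSet P x y)
  swap
  · show sInf (NsqSet P x y) ≤ _
    rw [Real.sInf_of_not_bddBelow hb]
    exact mul_nonneg hα0 hlog
  have hmem : α * mutInfo (fun a b => Q a b x y) ∈ NsqSet P x y := by
    refine ⟨n + 1, Fin.cons α (fun i => (1 - α) * mu i),
      Fin.cons Q (fun i a b x y => LA a x i * LB b y i), ?_, ?_, ?_, ?_, ?_⟩
    · intro i
      refine Fin.cases ?_ (fun i => ?_) i
      · simpa using hα0
      · simpa using mul_nonneg (sub_nonneg.2 hα1) (hmu0 i)
    · rw [Fin.sum_univ_succ]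
      simp [← Finset.mul_sum, hmu1]
    · intro i
      refine Fin.cases ?_ (fun i => ?_) i
      · simpa using hQ
      · simpa using prod_isDevice (fun a x => LA a x i) (fun b y => LB b y i)
          (fun a x => hA0 a x i) (fun b y => hB0 b y i) (fun x => hA1 x i) (fun y => hB1 y i)
    · intro a b x' y'
      rw [Fin.sum_univ_succ, hdecomp, hLeq, Finset.mul_sum]
      simp only [Fin.cons_zero, Fin.cons_succ]
      congr 1
      exact Finset.sum_congr rfl fun i _ => by ring
    · rw [Fin.sum_univ_succ]
      simp only [Fin.cons_zero, Fin.cons_succ]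
      have hz : ∀ i, mutInfo (fun a b => LA a x i * LB b y i) = 0 := fun i =>
        mutInfo_prod (fun a => LA a x i) (fun b => LB b y i) (hA1 x i) (hB1 y i)
      simp [hz]
  refine (csInf_le hb hmem).trans (mul_le_mul_of_nonneg_left ?_ hα0)
  exact mutInfo_le _ (fun a b => hQ.1 a b x y) (hQ.2.1 x y)
end
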